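/- The limit h = lim_{n→∞} (1/n)·log|X_n| exists; for every k ≥ 2 it satisfies ((Q−1)/(Q·(Q^k − 1)))·log|Σ_{Q;k}| ≤ h ≤ ((Q−1)/(Q·(Q^k − 1)))·(log|Σ_{Q;k}| + k·log 2); and consequently h = lim_{k→∞} ((Q−1)/(Q·(Q^k − 1)))·log|Σ_{Q;k}|. -/

import Mathlib

/-!
The integers of `[Q r, Q^{k+1} r)` are exactly the numbers `Q^j m + s` with `1 ≤ j ≤ k`,
`r ≤ m < Q r` and `0 ≤ s < Q^j`, each obtained once. For fixed `m`, the sites with `s ≠ 0` form a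
copy of `M_{Q;k}(Q+1)`, which is the union of the open intervals `(Q^j, 2 Q^j)`: the
correspondence `Q^j + s ↔ Q^j m + s` respects both `i ↦ i + 1` and `i ↦ Q i`. The sites with
`s = 0` separate the copies. When they carry `0`, the copies interact neither with each other nor
with the bottom block `[1, Q r)`, because the intervals `(Q m, Q (m + 1))` of the first level
contain no multiple of `Q`. Gluing patterns together (`card_lower`) and restricting
configurations to the copies (`card_upper`) give, for every `k` and every `r ≥ 1`,

`|X_{Qr-1}| |Σ_k|^{(Q-1)r} ≤ |X_{Q^{k+1}r-1}| ≤ |X_{Qr-1}| (|Σ_k| 2^k)^{(Q-1)r}`.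

Taking logarithms and iterating this recursion, with `r` of order `n / Q^{k+1}`, yields
`c_k log |Σ_k| n - O(log n) ≤ log |X_n| ≤ c_k (log |Σ_k| + k log 2) n + O(log n)` for `k ≥ 1`,
where `c_k = (Q-1)/(Q(Q^k-1))` (`eventually_lower`, `eventually_upper`). The gap `c_k k log 2`
between the two slopes tends to `0`, so the supremum of the lower slopes is the limit.
-/

open Filter Topology

/-- `V_{Q;j}(l)` (0-indexed: `VQ Q l 0 = V_{Q;1}(l) = {l, l+1, …, l+Q−2}`). -/
def VQ (Q l : ℕ) : ℕ → Finset ℕ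
  | 0 => Finset.Icc l (l + Q - 2)
  | j + 1 => (VQ Q l j).biUnion fun i => Finset.Icc (Q * i - (Q - 1)) (Q * i + (Q - 1))

/-- `M_{Q;k}(l) = V_{Q;1}(l) ∪ ⋯ ∪ V_{Q;k}(l)`. -/
def MQ (Q l k : ℕ) : Finset ℕ := (Finset.range k).biUnion (VQ Q l)

/-- `X_n` : functions `x : {1,…,n} → {0,1}` (encoded as functions `ℕ → Fin 2`
vanishing outside `[1,n]`) with `x_k·x_{Qk} = 0` whenever `Q·k ≤ n` and
`A(x_k, x_{k+1}) = 1` whenever `k+1 ≤ n`. -/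
def XQA (Q : ℕ) (A : Fin 2 → Fin 2 → Fin 2) (n : ℕ) : Set (ℕ → Fin 2) :=
  {x | (∀ k, 1 ≤ k → Q * k ≤ n → x k * x (Q * k) = 0) ∧
       (∀ k, 1 ≤ k → k + 1 ≤ n → A (x k) (x (k + 1)) = 1) ∧
       (∀ m, m = 0 ∨ n < m → x m = 0)}

/-- `Σ_{Q;k}` : functions `y : M_{Q;k}(Q+1) → {0,1}` with `y_i·y_{Qi} = 0` whenever
`i, Q·i ∈ M_{Q;k}(Q+1)` and `A(y_i, y_{i+1}) = 1` whenever `i, i+1 ∈ M_{Q;k}(Q+1)`. -/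
def SigQA (Q : ℕ) (A : Fin 2 → Fin 2 → Fin 2) (k : ℕ) : Set (ℕ → Fin 2) :=
  {y | (∀ i, i ∈ MQ Q (Q + 1) k → Q * i ∈ MQ Q (Q + 1) k → y i * y (Q * i) = 0) ∧
       (∀ i, i ∈ MQ Q (Q + 1) k → i + 1 ∈ MQ Q (Q + 1) k → A (y i) (y (i + 1)) = 1) ∧
       (∀ m, m ∉ MQ Q (Q + 1) k → y m = 0)}

/-! ### The sets `M_{Q;k}(Q+1)` -/

lemma VQ_eq (Q : ℕ) (hQ : 3 ≤ Q) (j : ℕ) :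
    VQ Q (Q + 1) j = Finset.Icc (Q ^ (j + 1) + 1) (2 * Q ^ (j + 1) - 1) := by
  induction j with
  | zero =>
    simp only [VQ, zero_add, pow_one]
    congr 1
    omega
  | succ j ih =>
    rw [VQ, ih]
    have ha : 3 ≤ Q ^ (j + 1) := le_trans hQ (Nat.le_self_pow (by omega) Q)
    have hp : Q ^ (j + 1 + 1) = Q * Q ^ (j + 1) := by ring
    rw [hp]
    generalize Q ^ (j + 1) = a at ha
    ext n
    simp only [Finset.mem_biUnion, Finset.mem_Icc]
    have hQa : 9 ≤ Q * a := by nlinarith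
    constructor
    · rintro ⟨i, ⟨h1, h2⟩, h3, h4⟩
      have h5 : Q * (a + 1) ≤ Q * i := Nat.mul_le_mul_left _ h1
      have h6 : Q * (i + 1) ≤ Q * (2 * a) := Nat.mul_le_mul_left _ (by omega)
      have h7 : Q * (2 * a) = 2 * (Q * a) := by ring
      rw [mul_add, mul_one] at h5 h6
      omega
    · rintro ⟨h1, h2⟩
      have h3 := Nat.div_add_mod n Q
      have h4 := Nat.mod_lt n (show 0 < Q by omega)
      have h5 : a ≤ n / Q := by
        rw [Nat.le_div_iff_mul_le (by omega)]
        nlinarith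
      have h6 : n / Q < 2 * a := by
        rw [Nat.div_lt_iff_lt_mul (by omega)]
        have h7 : 2 * a * Q = 2 * (Q * a) := by ring
        omega
      rcases Nat.lt_or_ge a (n / Q) with h | h
      · exact ⟨n / Q, by omega, by omega, by omega⟩
      · have h8 : n / Q = a := le_antisymm h h5
        rw [h8] at h3
        refine ⟨a + 1, by omega, ?_, ?_⟩ <;> rw [mul_add, mul_one] <;> omega

/-- `M_{Q;k}(Q+1)` is the union of the open integer intervals `(Q^j, 2 Q^j)`, `1 ≤ j ≤ k`. -/
lemma mem_MQ (Q : ℕ) (hQ : 3 ≤ Q) (k i : ℕ) :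
    i ∈ MQ Q (Q + 1) k ↔ ∃ j s, 1 ≤ j ∧ j ≤ k ∧ 0 < s ∧ s < Q ^ j ∧ i = Q ^ j + s := by
  simp only [MQ, Finset.mem_biUnion, Finset.mem_range, VQ_eq Q hQ, Finset.mem_Icc]
  constructor
  · rintro ⟨j, hj, h1, h2⟩
    exact ⟨j + 1, i - Q ^ (j + 1), by omega, by omega, by omega, by omega, by omega⟩
  · rintro ⟨j, s, h1, h2, h3, h4, rfl⟩
    obtain ⟨j, rfl⟩ := Nat.exists_eq_add_of_le' h1
    exact ⟨j, by omega, by omega, by omega⟩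

lemma log_level {Q j s : ℕ} (hQ : 3 ≤ Q) (hs : s < Q ^ j) : Nat.log Q (Q ^ j + s) = j := by
  refine Nat.log_eq_of_pow_le_of_lt_pow (by omega) ?_
  have h : 3 * Q ^ j ≤ Q ^ (j + 1) := by
    rw [pow_succ, mul_comm]
    exact Nat.mul_le_mul_left _ hQ
  omega

/-- The level `j` and the offset `s` of `Q^j + s` are determined by that number, so a number of
this form lies in `M_{Q;k}(Q+1)` only when `1 ≤ j ≤ k` and `s ≠ 0`. -/
lemma mem_MQ_level {Q k j s : ℕ} (hQ : 3 ≤ Q) (hs : s < Q ^ j) :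
    Q ^ j + s ∈ MQ Q (Q + 1) k ↔ 1 ≤ j ∧ j ≤ k ∧ 0 < s := by
  rw [mem_MQ Q hQ]
  constructor
  · rintro ⟨j', s', h1, h2, h3, h4, h5⟩
    have h6 := log_level hQ hs
    rw [h5, log_level hQ h4] at h6
    subst h6
    exact ⟨h1, h2, by omega⟩
  · rintro ⟨h1, h2, h3⟩
    exact ⟨j, s, h1, h2, h3, hs, rfl⟩

/-! ### Coordinates `N = Q^j m + s` above the bottom block -/

lemma level_eq {Q r j m s : ℕ} (hr : 1 ≤ r) (h1 : r ≤ m) (h2 : m < Q * r)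
    (hs : s < Q ^ j) : Nat.log Q ((Q ^ j * m + s) / r) = j := by
  refine Nat.log_eq_of_pow_le_of_lt_pow ?_ ?_
  · rw [Nat.le_div_iff_mul_le (by omega)]
    nlinarith [Nat.mul_le_mul_left (Q ^ j) h1]
  · rw [Nat.div_lt_iff_lt_mul (by omega)]
    have h3 : Q ^ j * (m + 1) ≤ Q ^ j * (Q * r) := Nat.mul_le_mul_left _ h2
    calc Q ^ j * m + s < Q ^ j * (m + 1) := by rw [mul_add, mul_one]; omega
      _ ≤ Q ^ j * (Q * r) := h3
      _ = Q ^ (j + 1) * r := by ring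

lemma exists_coords {Q r N : ℕ} (hQ : 3 ≤ Q) (hr : 1 ≤ r) (hN : Q * r ≤ N) :
    ∃ j m s, 1 ≤ j ∧ r ≤ m ∧ m < Q * r ∧ s < Q ^ j ∧ N = Q ^ j * m + s := by
  have hdiv : Q ≤ N / r := by rwa [Nat.le_div_iff_mul_le (by omega)]
  set j := Nat.log Q (N / r) with hj
  have h1 : Q ^ j ≤ N / r := Nat.pow_log_le_self Q (by omega)
  have h2 : N / r < Q ^ (j + 1) := Nat.lt_pow_succ_log_self (by omega) _
  rw [Nat.le_div_iff_mul_le (by omega)] at h1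
  rw [Nat.div_lt_iff_lt_mul (by omega)] at h2
  have hpos : 0 < Q ^ j := by positivity
  refine ⟨j, N / Q ^ j, N % Q ^ j, ?_, ?_, ?_, Nat.mod_lt _ hpos, (Nat.div_add_mod _ _).symm⟩
  · exact Nat.log_pos (by omega) hdiv
  · rw [Nat.le_div_iff_mul_le hpos, mul_comm]; exact h1
  · rw [Nat.div_lt_iff_lt_mul hpos]
    calc N < Q ^ (j + 1) * r := h2
      _ = Q * r * Q ^ j := by ring

/-- The configuration equal to `z` on `[0, Q r)` and, at `N = Q^j m + s ≥ Q r` with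
`r ≤ m < Q r` and `s < Q^j`, equal to the value of the pattern `y m` at `Q^j + s`. -/
def glue (Q r : ℕ) (z : ℕ → Fin 2) (y : ℕ → ℕ → Fin 2) (N : ℕ) : Fin 2 :=
  if N < Q * r then z N else
    y (N / Q ^ Nat.log Q (N / r)) (Q ^ Nat.log Q (N / r) + N % Q ^ Nat.log Q (N / r))

lemma glue_low {Q r : ℕ} (z : ℕ → Fin 2) (y : ℕ → ℕ → Fin 2) {N : ℕ} (h : N < Q * r) :
    glue Q r z y N = z N := if_pos h

lemma coords_ge {Q r j m s : ℕ} (hj : 1 ≤ j) (h1 : r ≤ m) :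
    Q * r ≤ Q ^ j * m + s :=
  (Nat.mul_le_mul (Nat.le_self_pow (by omega) Q) h1).trans (Nat.le_add_right _ _)

lemma glue_coords {Q r j m s : ℕ} (hQ : 3 ≤ Q) (hr : 1 ≤ r) (hj : 1 ≤ j) (h1 : r ≤ m)
    (h2 : m < Q * r) (hs : s < Q ^ j) (z : ℕ → Fin 2) (y : ℕ → ℕ → Fin 2) :
    glue Q r z y (Q ^ j * m + s) = y m (Q ^ j + s) := by
  have hge : Q * r ≤ Q ^ j * m + s := coords_ge hj h1
  have hpos : 0 < Q ^ j := by positivity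
  rw [glue, if_neg (by omega), level_eq hr h1 h2 hs, Nat.mul_add_mod, Nat.mod_eq_of_lt hs,
    Nat.mul_add_div hpos, Nat.div_eq_of_lt hs, add_zero]

/-- Gluing admissible patterns gives an admissible configuration: the sites `Q^j m` separating
the intervals of the copies carry `0`, and so do the multiples of `Q` on the first level, where
the copies meet the bottom block. -/
lemma glue_mem {Q : ℕ} {A : Fin 2 → Fin 2 → Fin 2} {r k : ℕ} (hQ : 3 ≤ Q)
    (hA : ∀ a : Fin 2, A 0 a = 1 ∧ A a 0 = 1) (hr : 1 ≤ r) {z : ℕ → Fin 2}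
    {y : ℕ → ℕ → Fin 2} (hz : z ∈ XQA Q A (Q * r - 1)) (hy : ∀ m, y m ∈ SigQA Q A k) :
    glue Q r z y ∈ XQA Q A (Q * Q ^ k * r - 1) := by
  obtain ⟨z1, z2, z3⟩ := hz
  have hQr : 3 ≤ Q * r := by nlinarith
  -- The separating sites carry the value `0`.
  have hsep : ∀ j m, 1 ≤ j → r ≤ m → m < Q * r → glue Q r z y (Q ^ j * m) = 0 := by
    intro j m hj h1 h2
    have hpos : 0 < Q ^ j := by positivity
    have := glue_coords hQ hr hj h1 h2 hpos z y
    rw [add_zero] at this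
    rw [this]
    refine (hy m).2.2 _ fun hmem => ?_
    have := (mem_MQ_level (k := k) hQ hpos).1 (by simpa using hmem)
    omega
  refine ⟨?_, ?_, ?_⟩
  · intro N hN _
    rcases Nat.lt_or_ge (Q * N) (Q * r) with h | h
    · rw [glue_low z y h, glue_low z y (by nlinarith)]
      exact z1 N hN (by omega)
    · have hrN : r ≤ N := Nat.le_of_mul_le_mul_left h (by omega)
      rcases Nat.lt_or_ge N (Q * r) with h' | h'
      · have := hsep 1 N le_rfl hrN h'
        rw [pow_one] at this
        rw [this, mul_zero]
      · obtain ⟨j, m, s, hj, h1, h2, hs, rfl⟩ := exists_coords hQ hr h'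
        have hs' : Q * s < Q ^ (j + 1) := by
          rw [pow_succ, mul_comm]
          exact Nat.mul_lt_mul_of_pos_right hs (by omega)
        have e : Q * (Q ^ j * m + s) = Q ^ (j + 1) * m + Q * s := by ring
        have e' : Q ^ (j + 1) + Q * s = Q * (Q ^ j + s) := by ring
        rw [e, glue_coords hQ hr hj h1 h2 hs, glue_coords hQ hr (by omega) h1 h2 hs', e']
        by_cases ha : Q ^ j + s ∈ MQ Q (Q + 1) k
        · by_cases hb : Q * (Q ^ j + s) ∈ MQ Q (Q + 1) k
          · exact (hy m).1 _ ha hb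
          · rw [(hy m).2.2 _ hb, mul_zero]
        · rw [(hy m).2.2 _ ha, zero_mul]
  · intro N hN _
    rcases Nat.lt_or_ge (N + 1) (Q * r) with h | h
    · rw [glue_low z y h, glue_low z y (by omega)]
      exact z2 N hN (by omega)
    · obtain ⟨j, m, s, hj, h1, h2, hs, he⟩ := exists_coords hQ hr h
      rcases Nat.eq_zero_or_pos s with rfl | hs0
      · rw [he, add_zero, hsep j m hj h1 h2]
        exact (hA _).2
      · have he' : N = Q ^ j * m + (s - 1) := by omega
        have e' : Q ^ j + (s - 1) + 1 = Q ^ j + s := by omega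
        rw [he, he', glue_coords hQ hr hj h1 h2 hs, glue_coords hQ hr hj h1 h2 (by omega)]
        by_cases ha : Q ^ j + (s - 1) ∈ MQ Q (Q + 1) k
        · by_cases hb : Q ^ j + s ∈ MQ Q (Q + 1) k
          · have := (hy m).2.1 _ ha (by rwa [e'])
            rwa [e'] at this
          · rw [(hy m).2.2 _ hb]
            exact (hA _).2
        · rw [(hy m).2.2 _ ha]
          exact (hA _).1
  · rintro N (rfl | hN)
    · rw [glue_low z y (by omega)]
      exact z3 0 (Or.inl rfl)
    · have hk : 0 < Q ^ k := by positivity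
      have hge : Q * r ≤ Q * Q ^ k * r :=
        Nat.mul_le_mul_right _ (Nat.le_mul_of_pos_right _ hk)
      obtain ⟨j, m, s, hj, h1, h2, hs, rfl⟩ := exists_coords hQ hr (show Q * r ≤ N by omega)
      rw [glue_coords hQ hr hj h1 h2 hs]
      refine (hy m).2.2 _ fun hmem => ?_
      obtain ⟨-, hjk, -⟩ := (mem_MQ_level hQ hs).1 hmem
      have h3 : Q ^ j * (m + 1) ≤ Q ^ k * (Q * r) :=
        Nat.mul_le_mul (Nat.pow_le_pow_right (by omega) hjk) h2
      have h4 : Q ^ k * (Q * r) = Q * Q ^ k * r := by ring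
      rw [mul_add, mul_one] at h3
      omega

/-! ### Restriction to the copies -/

/-- The pattern on `M_{Q;k}(Q+1)` read off from `x` on its `m`-th copy: level `j` is translated
by `Q^j (m - 1)`, so that `Q^j + s` goes to `Q^j m + s`. -/
def patt (Q k : ℕ) (x : ℕ → Fin 2) (m i : ℕ) : Fin 2 :=
  if i ∈ MQ Q (Q + 1) k then x (Q ^ Nat.log Q i * m + (i - Q ^ Nat.log Q i)) else 0

lemma patt_coords {Q k j s : ℕ} (hQ : 3 ≤ Q) (hj : 1 ≤ j) (hjk : j ≤ k) (hs0 : 0 < s)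
    (hs : s < Q ^ j) (x : ℕ → Fin 2) (m : ℕ) :
    patt Q k x m (Q ^ j + s) = x (Q ^ j * m + s) := by
  rw [patt, if_pos ((mem_MQ_level hQ hs).2 ⟨hj, hjk, hs0⟩), log_level hQ hs,
    Nat.add_sub_cancel_left]

lemma copy_lt {Q r k j m s : ℕ} (hQ : 3 ≤ Q) (h2 : m < Q * r) (hjk : j ≤ k)
    (hs : s < Q ^ j) : Q ^ j * m + s < Q * Q ^ k * r := by
  have h3 : Q ^ j * (m + 1) ≤ Q ^ k * (Q * r) :=
    Nat.mul_le_mul (Nat.pow_le_pow_right (by omega) hjk) h2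
  have h4 : Q ^ k * (Q * r) = Q * Q ^ k * r := by ring
  rw [mul_add, mul_one] at h3
  omega

lemma patt_mem {Q : ℕ} {A : Fin 2 → Fin 2 → Fin 2} {r k m : ℕ} (hQ : 3 ≤ Q)
    {x : ℕ → Fin 2} (hx : x ∈ XQA Q A (Q * Q ^ k * r - 1)) (h2 : m < Q * r) :
    patt Q k x m ∈ SigQA Q A k := by
  obtain ⟨x1, x2, x3⟩ := hx
  refine ⟨?_, ?_, fun i hi => if_neg hi⟩
  · intro i hi hi'
    obtain ⟨j, s, hj, hjk, hs0, hs, rfl⟩ := (mem_MQ Q hQ k i).1 hi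
    have hs' : Q * s < Q ^ (j + 1) := by
      rw [pow_succ, mul_comm]
      exact Nat.mul_lt_mul_of_pos_right hs (by omega)
    have e : Q * (Q ^ j * m + s) = Q ^ (j + 1) * m + Q * s := by ring
    have e' : Q * (Q ^ j + s) = Q ^ (j + 1) + Q * s := by ring
    rw [e'] at hi' ⊢
    obtain ⟨h3, h4, h5⟩ := (mem_MQ_level hQ hs').1 hi'
    rw [patt_coords hQ hj hjk hs0 hs, patt_coords hQ h3 h4 h5 hs', ← e]
    have := copy_lt hQ h2 h4 hs'
    exact x1 _ (by omega) (by omega)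
  · intro i hi hi'
    obtain ⟨j, s, hj, hjk, hs0, hs, rfl⟩ := (mem_MQ Q hQ k i).1 hi
    have hlt : s + 1 < Q ^ j := by
      by_contra hcon
      -- otherwise `i + 1 = 2 Q^j`, which is not in any of the open intervals
      have e : Q ^ j + s + 1 = Q ^ j + Q ^ j := by omega
      obtain ⟨j', s', hj', hjk', hs0', hs', he⟩ := (mem_MQ Q hQ k _).1 hi'
      rcases lt_trichotomy j j' with h | h | h
      · have : Q ^ (j + 1) ≤ Q ^ j' := Nat.pow_le_pow_right (by omega) h
        rw [pow_succ] at this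
        nlinarith
      · subst h; omega
      · have : Q ^ j' < Q ^ j := Nat.pow_lt_pow_right (by omega) h
        omega
    rw [add_assoc, patt_coords hQ hj hjk hs0 hs, patt_coords hQ hj hjk (by omega) hlt]
    have := copy_lt hQ h2 hjk hlt
    exact x2 _ (by omega) (by omega)

/-- The configuration cut off to `[0, n]`. -/
def cut (n : ℕ) (x : ℕ → Fin 2) (i : ℕ) : Fin 2 := if i ≤ n then x i else 0

lemma cut_mem {Q : ℕ} {A : Fin 2 → Fin 2 → Fin 2} {n n' : ℕ} (hQ : 3 ≤ Q) (h : n ≤ n')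
    {x : ℕ → Fin 2} (hx : x ∈ XQA Q A n') : cut n x ∈ XQA Q A n := by
  obtain ⟨x1, x2, x3⟩ := hx
  refine ⟨?_, ?_, ?_⟩
  · intro i hi hi'
    have : i ≤ Q * i := Nat.le_mul_of_pos_left _ (by omega)
    rw [cut, cut, if_pos (by omega), if_pos hi']
    exact x1 i hi (by omega)
  · intro i hi hi'
    rw [cut, cut, if_pos (by omega), if_pos hi']
    exact x2 i hi (by omega)
  · rintro m (rfl | hm)
    · rw [cut, if_pos (by omega)]
      exact x3 0 (Or.inl rfl)
    · rw [cut, if_neg (by omega)]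

lemma XQA_mono {Q : ℕ} {A : Fin 2 → Fin 2 → Fin 2} {n n' : ℕ}
    (hA : ∀ a : Fin 2, A 0 a = 1 ∧ A a 0 = 1) (h : n ≤ n') : XQA Q A n ⊆ XQA Q A n' := by
  rintro x ⟨x1, x2, x3⟩
  refine ⟨?_, ?_, fun m hm => x3 m (by omega)⟩
  · intro i hi _
    rcases Nat.lt_or_ge n (Q * i) with hin | hin
    · rw [x3 _ (Or.inr hin), mul_zero]
    · exact x1 i hi hin
  · intro i hi _
    rcases Nat.lt_or_ge n (i + 1) with hin | hin
    · rw [x3 _ (Or.inr hin)]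
      exact (hA _).2
    · exact x2 i hi hin

/-! ### Counting -/

lemma finite_of_support (S : Finset ℕ) (T : Set (ℕ → Fin 2))
    (h : ∀ x ∈ T, ∀ m, m ∉ S → x m = 0) : Finite T := by
  refine Finite.of_injective (fun (x : T) (i : S) => x.1 i) fun x y hxy => ?_
  ext m : 2
  by_cases hm : m ∈ S
  · exact congrFun hxy ⟨m, hm⟩
  · rw [h _ x.2 m hm, h _ y.2 m hm]

lemma finite_XQA (Q : ℕ) (A : Fin 2 → Fin 2 → Fin 2) (n : ℕ) : Finite (XQA Q A n) :=
  finite_of_support (Finset.range (n + 1)) _ fun _ hx m hm =>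
    hx.2.2 m (Or.inr (by rw [Finset.mem_range] at hm; omega))

lemma finite_SigQA (Q : ℕ) (A : Fin 2 → Fin 2 → Fin 2) (k : ℕ) : Finite (SigQA Q A k) :=
  finite_of_support (MQ Q (Q + 1) k) _ fun _ hx m hm => hx.2.2 m hm

lemma zero_mem_XQA {Q : ℕ} {A : Fin 2 → Fin 2 → Fin 2}
    (hA : ∀ a : Fin 2, A 0 a = 1 ∧ A a 0 = 1) (n : ℕ) : (fun _ => 0) ∈ XQA Q A n :=
  ⟨fun _ _ _ => rfl, fun _ _ _ => (hA 0).1, fun _ _ => rfl⟩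

lemma zero_mem_SigQA {Q : ℕ} {A : Fin 2 → Fin 2 → Fin 2}
    (hA : ∀ a : Fin 2, A 0 a = 1 ∧ A a 0 = 1) (k : ℕ) : (fun _ => 0) ∈ SigQA Q A k :=
  ⟨fun _ _ _ => rfl, fun _ _ _ => (hA 0).1, fun _ _ => rfl⟩

lemma card_XQA_pos {Q : ℕ} {A : Fin 2 → Fin 2 → Fin 2}
    (hA : ∀ a : Fin 2, A 0 a = 1 ∧ A a 0 = 1) (n : ℕ) : 0 < Nat.card (XQA Q A n) := by
  have := finite_XQA Q A n
  have : Nonempty (XQA Q A n) := ⟨⟨_, zero_mem_XQA hA n⟩⟩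
  exact Nat.card_pos

lemma card_SigQA_pos {Q : ℕ} {A : Fin 2 → Fin 2 → Fin 2}
    (hA : ∀ a : Fin 2, A 0 a = 1 ∧ A a 0 = 1) (k : ℕ) : 0 < Nat.card (SigQA Q A k) := by
  have := finite_SigQA Q A k
  have : Nonempty (SigQA Q A k) := ⟨⟨_, zero_mem_SigQA hA k⟩⟩
  exact Nat.card_pos

lemma card_Ico_index (Q r : ℕ) : Nat.card (Finset.Ico r (Q * r)) = (Q - 1) * r := by
  rw [Nat.card_eq_fintype_card, Fintype.card_coe, Nat.card_Ico, Nat.sub_mul, one_mul]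

/-- Gluing is injective, so `(Q-1) r` independent patterns and a bottom block embed into
`X_{Q^{k+1} r - 1}`. -/
lemma card_lower {Q : ℕ} {A : Fin 2 → Fin 2 → Fin 2} {r k : ℕ} (hQ : 3 ≤ Q)
    (hA : ∀ a : Fin 2, A 0 a = 1 ∧ A a 0 = 1) (hr : 1 ≤ r) :
    Nat.card (XQA Q A (Q * r - 1)) * Nat.card (SigQA Q A k) ^ ((Q - 1) * r) ≤
      Nat.card (XQA Q A (Q * Q ^ k * r - 1)) := by
  classical
  have := finite_XQA Q A (Q * Q ^ k * r - 1)
  have hQr : 3 ≤ Q * r := by nlinarith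
  let ext0 : (Finset.Ico r (Q * r) → SigQA Q A k) → ℕ → SigQA Q A k := fun y m =>
    if h : m ∈ Finset.Ico r (Q * r) then y ⟨m, h⟩ else ⟨_, zero_mem_SigQA hA k⟩
  let F : XQA Q A (Q * r - 1) × (Finset.Ico r (Q * r) → SigQA Q A k) →
      XQA Q A (Q * Q ^ k * r - 1) := fun p =>
    ⟨glue Q r p.1.1 (fun m => (ext0 p.2 m).1), glue_mem hQ hA hr p.1.2 fun m => (ext0 p.2 m).2⟩
  have hF : Function.Injective F := by
    rintro ⟨z, y⟩ ⟨z', y'⟩ h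
    have h' : ∀ N, glue Q r z.1 (fun m => (ext0 y m).1) N =
        glue Q r z'.1 (fun m => (ext0 y' m).1) N := congrFun (congrArg Subtype.val h)
    refine Prod.ext (Subtype.ext (funext fun N => ?_))
      (funext fun m => Subtype.ext (funext fun i => ?_))
    · rcases Nat.lt_or_ge N (Q * r) with hN | hN
      · have := h' N
        rwa [glue_low _ _ hN, glue_low _ _ hN] at this
      · exact (z.2.2.2 N (Or.inr (by omega))).trans (z'.2.2.2 N (Or.inr (by omega))).symm
    · by_cases hi : i ∈ MQ Q (Q + 1) k
      · obtain ⟨j, s, hj, hjk, hs0, hs, rfl⟩ := (mem_MQ Q hQ k i).1 hi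
        have hm := Finset.mem_Ico.1 m.2
        have := h' (Q ^ j * m + s)
        rw [glue_coords hQ hr hj hm.1 hm.2 hs, glue_coords hQ hr hj hm.1 hm.2 hs] at this
        simpa only [ext0, dif_pos m.2] using this
      · exact ((y m).2.2.2 i hi).trans ((y' m).2.2.2 i hi).symm
  have := Nat.card_le_card_of_injective F hF
  rwa [Nat.card_prod, Nat.card_fun, card_Ico_index] at this

/-- A configuration of `X_{Q^{k+1} r - 1}` is determined by its bottom block, its patterns on the
`(Q-1) r` copies and its values at the `k` separating sites attached to each copy. -/
lemma card_upper {Q : ℕ} {A : Fin 2 → Fin 2 → Fin 2} {r k : ℕ} (hQ : 3 ≤ Q) (hr : 1 ≤ r) :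
    Nat.card (XQA Q A (Q * Q ^ k * r - 1)) ≤
      Nat.card (XQA Q A (Q * r - 1)) * (Nat.card (SigQA Q A k) * 2 ^ k) ^ ((Q - 1) * r) := by
  have := finite_XQA Q A (Q * r - 1)
  have := finite_SigQA Q A k
  have hQr : 3 ≤ Q * r := by nlinarith
  have hk : 0 < Q ^ k := by positivity
  have hge : Q * r ≤ Q * Q ^ k * r :=
    Nat.mul_le_mul_right _ (Nat.le_mul_of_pos_right _ hk)
  let F : XQA Q A (Q * Q ^ k * r - 1) → XQA Q A (Q * r - 1) ×
      (Finset.Ico r (Q * r) → SigQA Q A k × (Fin k → Fin 2)) := fun x =>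
    (⟨cut (Q * r - 1) x.1, cut_mem hQ (by omega) x.2⟩, fun m =>
      (⟨patt Q k x.1 m, patt_mem hQ x.2 (Finset.mem_Ico.1 m.2).2⟩,
        fun j => x.1 (Q ^ (j.1 + 1) * m)))
  have hF : Function.Injective F := by
    intro x x' h
    have hc : ∀ N, cut (Q * r - 1) x.1 N = cut (Q * r - 1) x'.1 N :=
      congrFun (congrArg (fun p => p.1.1) h)
    have hp : ∀ m i, patt Q k x.1 (m : Finset.Ico r (Q * r)) i = patt Q k x'.1 m i :=
      fun m => congrFun (congrArg (fun p => (p.2 m).1.1) h)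
    have hb : ∀ (m : Finset.Ico r (Q * r)) (j : Fin k),
        x.1 (Q ^ (j.1 + 1) * m) = x'.1 (Q ^ (j.1 + 1) * m) :=
      fun m => congrFun (congrArg (fun p => (p.2 m).2) h)
    refine Subtype.ext (funext fun N => ?_)
    rcases Nat.lt_or_ge N (Q * r) with hN | hN
    · have := hc N
      rwa [cut, cut, if_pos (by omega), if_pos (by omega)] at this
    · rcases Nat.lt_or_ge N (Q * Q ^ k * r) with hN' | hN'
      · obtain ⟨j, m, s, hj, h1, h2, hs, rfl⟩ := exists_coords hQ hr hN
        have hjk : j ≤ k := by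
          by_contra hcon
          have h3 : Q ^ (k + 1) * r ≤ Q ^ j * m :=
            Nat.mul_le_mul (Nat.pow_le_pow_right (by omega) (by omega)) h1
          have h4 : Q ^ (k + 1) * r = Q * Q ^ k * r := by ring
          omega
        have hm : m ∈ Finset.Ico r (Q * r) := Finset.mem_Ico.2 ⟨h1, h2⟩
        rcases Nat.eq_zero_or_pos s with rfl | hs0
        · obtain ⟨j, rfl⟩ := Nat.exists_eq_add_of_le' hj
          exact hb ⟨m, hm⟩ ⟨j, hjk⟩
        · have := hp ⟨m, hm⟩ (Q ^ j + s)
          rwa [patt_coords hQ hj hjk hs0 hs, patt_coords hQ hj hjk hs0 hs] at this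
      · exact (x.2.2.2 N (Or.inr (by omega))).trans (x'.2.2.2 N (Or.inr (by omega))).symm
  have := Nat.card_le_card_of_injective F hF
  rw [Nat.card_prod, Nat.card_fun, card_Ico_index, Nat.card_prod, Nat.card_fun] at this
  simpa using this

lemma card_succ_le {Q : ℕ} {A : Fin 2 → Fin 2 → Fin 2} (hQ : 3 ≤ Q) (n : ℕ) :
    Nat.card (XQA Q A (n + 1)) ≤ Nat.card (XQA Q A n) * 2 := by
  have := finite_XQA Q A n
  let F : XQA Q A (n + 1) → XQA Q A n × Fin 2 := fun x =>
    (⟨cut n x.1, cut_mem hQ (by omega) x.2⟩, x.1 (n + 1))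
  have hF : Function.Injective F := by
    intro x x' h
    have hc : ∀ N, cut n x.1 N = cut n x'.1 N := congrFun (congrArg (fun p => p.1.1) h)
    have hb : x.1 (n + 1) = x'.1 (n + 1) := congrArg (fun p => p.2) h
    refine Subtype.ext (funext fun N => ?_)
    rcases lt_trichotomy N (n + 1) with hN | rfl | hN
    · have := hc N
      rwa [cut, cut, if_pos (by omega), if_pos (by omega)] at this
    · exact hb
    · exact (x.2.2.2 N (Or.inr (by omega))).trans (x'.2.2.2 N (Or.inr (by omega))).symm
  have := Nat.card_le_card_of_injective F hF
  rw [Nat.card_prod] at this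
  simpa using this

/-! ### Asymptotics -/

/-- Each step of the recursion shrinks `n + 1` by a factor of at least `2`, so an error growing by
at most `D` per step is `O(log n)`; the factor `2` absorbs `1 / log 2`. -/
lemma err_bound {e : ℕ → ℝ} {D : ℝ} (hD : 0 ≤ D) {Q q : ℕ} (hQ : 1 ≤ Q) (hq : 2 ≤ q)
    (h0 : ∀ n, n + 1 < Q * q → e n ≤ D)
    (h1 : ∀ n r, 1 ≤ r → Q * q * r ≤ n + 1 → n + 1 < Q * q * (r + 1) →
      e n ≤ e (Q * r - 1) + D) (n : ℕ) :
    e n ≤ D * (1 + 2 * Real.log (n + 1)) := by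
  induction n using Nat.strong_induction_on with
  | _ n ih =>
    have hQq : 0 < Q * q := by positivity
    have hn0 : (0 : ℝ) ≤ Real.log (n + 1) := Real.log_nonneg (by
      have : (0 : ℝ) ≤ n := Nat.cast_nonneg n
      linarith)
    rcases Nat.lt_or_ge (n + 1) (Q * q) with h | h
    · nlinarith [h0 n h, mul_nonneg hD hn0]
    · set r := (n + 1) / (Q * q) with hr
      have hr1 : 1 ≤ r := by rw [hr, Nat.le_div_iff_mul_le hQq]; omega
      have h2 : Q * q * r ≤ n + 1 := Nat.mul_div_le _ _
      have h3 : n + 1 < Q * q * (r + 1) := Nat.lt_mul_div_succ _ hQq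
      have h4 : 2 * (Q * r) ≤ n + 1 := by
        refine le_trans ?_ h2
        calc 2 * (Q * r) ≤ q * (Q * r) := Nat.mul_le_mul_right _ hq
          _ = Q * q * r := by ring
      have hQr : 1 ≤ Q * r := Nat.mul_pos hQ hr1
      have h5 := ih (Q * r - 1) (by omega)
      have h6 : ((Q * r - 1 : ℕ) : ℝ) + 1 = ((Q * r : ℕ) : ℝ) := by
        rw [Nat.cast_sub hQr]; simp
      have hpos : (0 : ℝ) < ((Q * r : ℕ) : ℝ) := by exact_mod_cast hQr
      have h7 : Real.log 2 + Real.log ((Q * r : ℕ) : ℝ) ≤ Real.log (n + 1) := by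
        rw [← Real.log_mul (by norm_num) hpos.ne']
        exact Real.log_le_log (by positivity) (by exact_mod_cast h4)
      have h8 := Real.log_two_gt_d9
      rw [h6] at h5
      have h9 := h1 n r hr1 h2 h3
      nlinarith [mul_le_mul_of_nonneg_left h7 hD]

lemma err_tendsto (c D : ℝ) :
    Tendsto (fun n : ℕ => (c + D * (1 + 2 * Real.log ((n : ℝ) + 1))) / (n : ℝ)) atTop (𝓝 0) := by
  have h1 : Tendsto (fun n : ℕ => (n : ℝ) + 1) atTop atTop :=
    tendsto_atTop_add_const_right _ _ tendsto_natCast_atTop_atTop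
  have h2 := (Real.tendsto_pow_log_div_mul_add_atTop 1 (-1) 1 one_ne_zero).comp h1
  have h3 := (tendsto_const_div_atTop_nhds_zero_nat (c + D)).add (h2.const_mul (2 * D))
  simp only [mul_zero, add_zero] at h3
  refine h3.congr fun n => ?_
  simp only [Function.comp, pow_one, one_mul, add_neg_cancel_right]
  ring

section
variable {Q : ℕ} {A : Fin 2 → Fin 2 → Fin 2}

lemma logX_mono (hA : ∀ a : Fin 2, A 0 a = 1 ∧ A a 0 = 1) {n n' : ℕ}
    (h : n ≤ n') : Real.log (Nat.card (XQA Q A n)) ≤ Real.log (Nat.card (XQA Q A n')) := by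
  have := finite_XQA Q A n'
  refine Real.log_le_log (by exact_mod_cast card_XQA_pos hA n) ?_
  exact_mod_cast Nat.card_mono (Set.toFinite _) (XQA_mono hA h)

lemma logX_add_le (hQ : 3 ≤ Q) (hA : ∀ a : Fin 2, A 0 a = 1 ∧ A a 0 = 1) (n d : ℕ) :
    Real.log (Nat.card (XQA Q A (n + d))) ≤
      Real.log (Nat.card (XQA Q A n)) + d * Real.log 2 := by
  induction d with
  | zero => simp
  | succ d ih =>
    have hp := card_XQA_pos (Q := Q) hA (n + d)
    have h1 : Real.log (Nat.card (XQA Q A (n + d + 1))) ≤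
        Real.log ((Nat.card (XQA Q A (n + d)) : ℝ) * 2) :=
      Real.log_le_log (by exact_mod_cast card_XQA_pos hA _)
        (by exact_mod_cast card_succ_le hQ (n + d))
    rw [Real.log_mul (by exact_mod_cast hp.ne') (by norm_num)] at h1
    rw [← add_assoc]
    push_cast
    linarith

lemma logX_lower (hQ : 3 ≤ Q) (hA : ∀ a : Fin 2, A 0 a = 1 ∧ A a 0 = 1) (k : ℕ) {r : ℕ}
    (hr : 1 ≤ r) :
    Real.log (Nat.card (XQA Q A (Q * r - 1))) +
        ((Q : ℝ) - 1) * r * Real.log (Nat.card (SigQA Q A k)) ≤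
      Real.log (Nat.card (XQA Q A (Q * Q ^ k * r - 1))) := by
  have hp := card_XQA_pos (Q := Q) hA (Q * r - 1)
  have hs := card_SigQA_pos (Q := Q) hA k
  have h : Real.log ((Nat.card (XQA Q A (Q * r - 1)) : ℝ) *
      (Nat.card (SigQA Q A k) : ℝ) ^ ((Q - 1) * r)) ≤
      Real.log (Nat.card (XQA Q A (Q * Q ^ k * r - 1))) :=
    Real.log_le_log (by positivity) (by exact_mod_cast card_lower hQ hA hr)
  rw [Real.log_mul (by positivity) (by positivity), Real.log_pow] at h
  push_cast [Nat.cast_sub (show 1 ≤ Q by omega)] at h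
  exact h

lemma logX_upper (hQ : 3 ≤ Q) (hA : ∀ a : Fin 2, A 0 a = 1 ∧ A a 0 = 1) (k : ℕ) {r : ℕ}
    (hr : 1 ≤ r) :
    Real.log (Nat.card (XQA Q A (Q * Q ^ k * r - 1))) ≤
      Real.log (Nat.card (XQA Q A (Q * r - 1))) +
        ((Q : ℝ) - 1) * r * (Real.log (Nat.card (SigQA Q A k)) + k * Real.log 2) := by
  have hp := card_XQA_pos (Q := Q) hA (Q * r - 1)
  have hp' := card_XQA_pos (Q := Q) hA (Q * Q ^ k * r - 1)
  have hs := card_SigQA_pos (Q := Q) hA k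
  have h : Real.log (Nat.card (XQA Q A (Q * Q ^ k * r - 1))) ≤
      Real.log ((Nat.card (XQA Q A (Q * r - 1)) : ℝ) *
      ((Nat.card (SigQA Q A k) : ℝ) * 2 ^ k) ^ ((Q - 1) * r)) :=
    Real.log_le_log (by positivity) (by exact_mod_cast card_upper hQ hr)
  rw [Real.log_mul (by positivity) (by positivity), Real.log_pow,
    Real.log_mul (by positivity) (by positivity), Real.log_pow] at h
  push_cast [Nat.cast_sub (show 1 ≤ Q by omega)] at h
  exact h

lemma logSig_nonneg (k : ℕ) : 0 ≤ Real.log (Nat.card (SigQA Q A k)) :=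
  Real.log_natCast_nonneg _

/-- The normalizing constant `c = (Q-1)/(Q(q-1))` solves `c Q + (Q-1) = c Q q`; this is what makes
the linear term reproduce itself under the recursion. -/
lemma const_eq {Q q : ℝ} (hQ : 0 < Q) (hq : 1 < q) :
    (Q - 1) / (Q * (q - 1)) * Q + (Q - 1) = (Q - 1) / (Q * (q - 1)) * (Q * q) := by
  have : q - 1 ≠ 0 := by linarith
  field_simp
  ring

lemma const_nonneg (hQ : 3 ≤ Q) (k : ℕ) :
    0 ≤ ((Q : ℝ) - 1) / ((Q : ℝ) * ((Q : ℝ) ^ k - 1)) := by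
  have h : (3 : ℝ) ≤ Q := by exact_mod_cast hQ
  have : (1 : ℝ) ≤ (Q : ℝ) ^ k := one_le_pow₀ (by linarith)
  exact div_nonneg (by linarith) (mul_nonneg (by linarith) (by linarith))

lemma cast_pred {N : ℕ} (h : 1 ≤ N) : ((N - 1 : ℕ) : ℝ) + 1 = N := by
  rw [Nat.cast_sub h]; simp

lemma eventually_upper (hQ : 3 ≤ Q) (hA : ∀ a : Fin 2, A 0 a = 1 ∧ A a 0 = 1) {k : ℕ}
    (hk : 1 ≤ k) {ε : ℝ} (hε : 0 < ε) :
    ∀ᶠ n : ℕ in atTop, Real.log (Nat.card (XQA Q A n)) / (n : ℝ) ≤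
      ((Q : ℝ) - 1) / ((Q : ℝ) * ((Q : ℝ) ^ k - 1)) *
        (Real.log (Nat.card (SigQA Q A k)) + (k : ℝ) * Real.log 2) + ε := by
  set c := ((Q : ℝ) - 1) / ((Q : ℝ) * ((Q : ℝ) ^ k - 1)) with hc
  set b := Real.log (Nat.card (SigQA Q A k)) + (k : ℝ) * Real.log 2 with hb
  have hc0 : 0 ≤ c := const_nonneg hQ k
  have hl2 : 0 < Real.log 2 := Real.log_pos (by norm_num)
  have hb0 : 0 ≤ b := add_nonneg (logSig_nonneg k) (by positivity)
  have hq : 3 ≤ Q ^ k := hQ.trans (Nat.le_self_pow (by omega) Q)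
  have hqR : (3 : ℝ) ≤ (Q : ℝ) ^ k := by exact_mod_cast hq
  have hQR : (3 : ℝ) ≤ (Q : ℝ) := by exact_mod_cast hQ
  have hce := const_eq (Q := (Q : ℝ)) (q := (Q : ℝ) ^ k) (by linarith) (by linarith)
  rw [← hc] at hce
  set L : ℕ → ℝ := fun n => Real.log (Nat.card (XQA Q A n)) with hL
  have hL0 : ∀ n, 0 ≤ L n := fun n => Real.log_natCast_nonneg _
  set D : ℝ := L 0 + (Q : ℝ) * (Q : ℝ) ^ k * Real.log 2 with hDdef
  have hD : 0 ≤ D := add_nonneg (hL0 0) (by positivity)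
  have key : ∀ n : ℕ, L n - c * b * ((n : ℝ) + 1) ≤ D * (1 + 2 * Real.log ((n : ℝ) + 1)) := by
    refine err_bound (e := fun n => L n - c * b * ((n : ℝ) + 1)) hD (by omega) (by omega)
      (q := Q ^ k) (Q := Q) ?_ ?_
    · intro n hn
      have h1 := logX_add_le hQ hA 0 n
      rw [zero_add] at h1
      have h2 : (n : ℝ) ≤ (Q : ℝ) * (Q : ℝ) ^ k := by exact_mod_cast (show n ≤ Q * Q ^ k by omega)
      have h3 : 0 ≤ c * b * ((n : ℝ) + 1) := by positivity
      have h4 := mul_le_mul_of_nonneg_right h2 hl2.le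
      simp only [hL, hDdef]
      linarith
    · intro n r hr h1 h2
      have hQr : 1 ≤ Q * r := Nat.mul_pos (by omega) hr
      have hQqr : 1 ≤ Q * Q ^ k * r := Nat.mul_pos (by positivity) hr
      obtain ⟨d, hd⟩ := Nat.exists_eq_add_of_le (show Q * Q ^ k * r - 1 ≤ n by omega)
      have hdle : d ≤ Q * Q ^ k := by
        rw [mul_add, mul_one] at h2
        omega
      have h3 := logX_add_le hQ hA (Q * Q ^ k * r - 1) d
      rw [← hd] at h3
      have h4 := logX_upper hQ hA k hr
      rw [← hb] at h4
      have h5 : (d : ℝ) ≤ (Q : ℝ) * (Q : ℝ) ^ k := by exact_mod_cast hdle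
      have h6 := mul_le_mul_of_nonneg_right h5 hl2.le
      have h7 : (Q : ℝ) * (Q : ℝ) ^ k * r ≤ (n : ℝ) + 1 := by exact_mod_cast h1
      have h8 := mul_le_mul_of_nonneg_left h7 (mul_nonneg hc0 hb0)
      have h9 : c * b * ((Q : ℝ) * (Q : ℝ) ^ k * r) =
          c * b * ((Q : ℝ) * r) + ((Q : ℝ) - 1) * r * b := by
        linear_combination (-b * r) * hce
      have h10 := cast_pred hQr
      push_cast at h10
      rw [h10]
      have := hL0 0
      simp only [hL, hDdef] at *
      linarith
  have ht := (err_tendsto (c * b) D).eventually (gt_mem_nhds hε)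
  filter_upwards [ht, eventually_gt_atTop 0] with n hn hn0
  have hnR : (0 : ℝ) < n := by exact_mod_cast hn0
  rw [div_lt_iff₀ hnR] at hn
  rw [div_le_iff₀ hnR]
  have := key n
  simp only [hL] at this
  linarith

lemma eventually_lower (hQ : 3 ≤ Q) (hA : ∀ a : Fin 2, A 0 a = 1 ∧ A a 0 = 1) {k : ℕ}
    (hk : 1 ≤ k) {ε : ℝ} (hε : 0 < ε) :
    ∀ᶠ n : ℕ in atTop, ((Q : ℝ) - 1) / ((Q : ℝ) * ((Q : ℝ) ^ k - 1)) *
        Real.log (Nat.card (SigQA Q A k)) - ε ≤ Real.log (Nat.card (XQA Q A n)) / (n : ℝ) := by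
  set c := ((Q : ℝ) - 1) / ((Q : ℝ) * ((Q : ℝ) ^ k - 1)) with hc
  set b := Real.log (Nat.card (SigQA Q A k)) with hb
  have hc0 : 0 ≤ c := const_nonneg hQ k
  have hb0 : 0 ≤ b := logSig_nonneg k
  have hq : 3 ≤ Q ^ k := hQ.trans (Nat.le_self_pow (by omega) Q)
  have hqR : (3 : ℝ) ≤ (Q : ℝ) ^ k := by exact_mod_cast hq
  have hQR : (3 : ℝ) ≤ (Q : ℝ) := by exact_mod_cast hQ
  have hce := const_eq (Q := (Q : ℝ)) (q := (Q : ℝ) ^ k) (by linarith) (by linarith)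
  rw [← hc] at hce
  set L : ℕ → ℝ := fun n => Real.log (Nat.card (XQA Q A n)) with hL
  have hL0 : ∀ n, 0 ≤ L n := fun n => Real.log_natCast_nonneg _
  set D : ℝ := c * b * ((Q : ℝ) * (Q : ℝ) ^ k) with hDdef
  have hD : 0 ≤ D := by positivity
  have key : ∀ n : ℕ, c * b * ((n : ℝ) + 1) - L n ≤ D * (1 + 2 * Real.log ((n : ℝ) + 1)) := by
    refine err_bound (e := fun n => c * b * ((n : ℝ) + 1) - L n) hD (by omega) (by omega)
      (q := Q ^ k) (Q := Q) ?_ ?_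
    · intro n hn
      have h2 : (n : ℝ) + 1 ≤ (Q : ℝ) * (Q : ℝ) ^ k := by exact_mod_cast hn.le
      have h4 := mul_le_mul_of_nonneg_left h2 (mul_nonneg hc0 hb0)
      have := hL0 n
      simp only [hDdef]
      linarith
    · intro n r hr h1 h2
      have hQr : 1 ≤ Q * r := Nat.mul_pos (by omega) hr
      have h3 := logX_mono (Q := Q) hA (show Q * Q ^ k * r - 1 ≤ n by omega)
      have h4 := logX_lower hQ hA k hr
      rw [← hb] at h4
      have h7 : (n : ℝ) + 1 ≤ (Q : ℝ) * (Q : ℝ) ^ k * (r + 1) := by exact_mod_cast h2.le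
      have h8 := mul_le_mul_of_nonneg_left h7 (mul_nonneg hc0 hb0)
      have h9 : c * b * ((Q : ℝ) * (Q : ℝ) ^ k * (r + 1)) =
          c * b * ((Q : ℝ) * r) + ((Q : ℝ) - 1) * r * b + c * b * ((Q : ℝ) * (Q : ℝ) ^ k) := by
        linear_combination (-b * r) * hce
      have h10 := cast_pred hQr
      push_cast at h10
      rw [h10]
      simp only [hL, hDdef] at *
      linarith
  have ht := (err_tendsto 0 D).eventually (gt_mem_nhds hε)
  filter_upwards [ht, eventually_gt_atTop 0] with n hn hn0
  have hnR : (0 : ℝ) < n := by exact_mod_cast hn0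
  rw [div_lt_iff₀ hnR] at hn
  rw [le_div_iff₀ hnR]
  have := key n
  have hcb : 0 ≤ c * b := mul_nonneg hc0 hb0
  simp only [hL] at this
  linarith

end

/-- The gap between the two bounds vanishes as `k → ∞`. -/
lemma gap_tendsto {Q : ℕ} (hQ : 3 ≤ Q) :
    Tendsto (fun k : ℕ => ((Q : ℝ) - 1) / ((Q : ℝ) * ((Q : ℝ) ^ k - 1)) * ((k : ℝ) * Real.log 2))
      atTop (𝓝 0) := by
  have hQR : (3 : ℝ) ≤ (Q : ℝ) := by exact_mod_cast hQ
  have hl2 : 0 < Real.log 2 := Real.log_pos (by norm_num)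
  have h := (tendsto_pow_const_div_const_pow_of_one_lt 1
    (show (1 : ℝ) < Q by linarith)).const_mul (2 * Real.log 2)
  rw [mul_zero] at h
  refine tendsto_of_tendsto_of_tendsto_of_le_of_le' tendsto_const_nhds h
    (Eventually.of_forall fun k => mul_nonneg (const_nonneg hQ k) (by positivity)) ?_
  filter_upwards [eventually_ge_atTop 1] with k hk
  have hq : (3 : ℝ) ≤ (Q : ℝ) ^ k := hQR.trans (le_self_pow₀ (by linarith) (by omega))
  have h1 : ((Q : ℝ) - 1) / ((Q : ℝ) * ((Q : ℝ) ^ k - 1)) ≤ 2 / (Q : ℝ) ^ k := by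
    rw [div_le_div_iff₀ (mul_pos (by linarith) (by linarith)) (by linarith)]
    nlinarith
  calc _ ≤ 2 / (Q : ℝ) ^ k * ((k : ℝ) * Real.log 2) :=
        mul_le_mul_of_nonneg_right h1 (by positivity)
    _ = _ := by rw [pow_one]; ring

/-- For `Q ≥ 3`, the limit `h = lim_{n→∞} (1/n)·log|X_n|` exists;
for every `k ≥ 2`,
`((Q−1)/(Q(Q^k − 1)))·log|Σ_{Q;k}| ≤ h ≤ ((Q−1)/(Q(Q^k − 1)))·(log|Σ_{Q;k}| + k·log 2)`;
and `h = lim_{k→∞} ((Q−1)/(Q(Q^k − 1)))·log|Σ_{Q;k}|`. -/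
theorem entropy_XQA (Q : ℕ) (hQ : 3 ≤ Q) (A : Fin 2 → Fin 2 → Fin 2)
    (hA : ∀ a : Fin 2, A 0 a = 1 ∧ A a 0 = 1) :
    ∃ h : ℝ,
      Tendsto (fun n : ℕ => Real.log (Nat.card (XQA Q A n)) / (n : ℝ)) atTop (nhds h) ∧
      (∀ k : ℕ, 2 ≤ k →
        ((Q : ℝ) - 1) / ((Q : ℝ) * ((Q : ℝ) ^ k - 1)) *
            Real.log (Nat.card (SigQA Q A k)) ≤ h ∧
        h ≤ ((Q : ℝ) - 1) / ((Q : ℝ) * ((Q : ℝ) ^ k - 1)) *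
            (Real.log (Nat.card (SigQA Q A k)) + (k : ℝ) * Real.log 2)) ∧
      Tendsto (fun k : ℕ => ((Q : ℝ) - 1) / ((Q : ℝ) * ((Q : ℝ) ^ k - 1)) *
          Real.log (Nat.card (SigQA Q A k))) atTop (nhds h) := by
  classical
  set lo : ℕ → ℝ := fun k => ((Q : ℝ) - 1) / ((Q : ℝ) * ((Q : ℝ) ^ k - 1)) *
    Real.log (Nat.card (SigQA Q A k)) with hlo
  set gap : ℕ → ℝ := fun k =>
    ((Q : ℝ) - 1) / ((Q : ℝ) * ((Q : ℝ) ^ k - 1)) * ((k : ℝ) * Real.log 2) with hgap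
  have hup : ∀ k, ((Q : ℝ) - 1) / ((Q : ℝ) * ((Q : ℝ) ^ k - 1)) *
      (Real.log (Nat.card (SigQA Q A k)) + (k : ℝ) * Real.log 2) = lo k + gap k :=
    fun k => mul_add _ _ _
  have hgap0 : Tendsto gap atTop (𝓝 0) := gap_tendsto hQ
  -- Every lower bound is at most every upper bound, since both constrain the same sequence.
  have hcross : ∀ i j : ℕ, lo (i + 1) ≤ lo (j + 1) + gap (j + 1) := by
    intro i j
    refine le_of_forall_pos_le_add fun ε hε => ?_
    obtain ⟨n, h1, h2⟩ := ((eventually_upper hQ hA (show 1 ≤ j + 1 by omega) (half_pos hε)).and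
      (eventually_lower hQ hA (show 1 ≤ i + 1 by omega) (half_pos hε))).exists
    rw [hup] at h1
    have h3 : lo (i + 1) - ε / 2 ≤ _ := h2
    linarith
  have hbdd : BddAbove (Set.range fun i => lo (i + 1)) :=
    ⟨_, by rintro _ ⟨i, rfl⟩; exact hcross i 0⟩
  set h : ℝ := ⨆ i, lo (i + 1) with hh
  have hle : ∀ k, 1 ≤ k → lo k ≤ h ∧ h ≤ lo k + gap k := by
    intro k hk
    obtain ⟨k, rfl⟩ := Nat.exists_eq_add_of_le' hk
    exact ⟨le_ciSup hbdd k, ciSup_le fun i => hcross i k⟩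
  refine ⟨h, ?_, fun k hk => ⟨(hle k (by omega)).1, ?_⟩, ?_⟩
  · rw [Metric.tendsto_atTop']
    intro ε hε
    obtain ⟨k, hk, hk1⟩ := ((hgap0.eventually (gt_mem_nhds (half_pos hε))).and
      (eventually_ge_atTop 1)).exists
    obtain ⟨h1, h2⟩ := hle k hk1
    obtain ⟨N, hN⟩ := eventually_atTop.1 ((eventually_upper hQ hA hk1 (half_pos hε)).and
      (eventually_lower hQ hA hk1 (half_pos hε)))
    refine ⟨N, fun n hn => ?_⟩
    obtain ⟨h3, h4⟩ := hN n hn.le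
    rw [hup] at h3
    have h5 : lo k - ε / 2 ≤ _ := h4
    rw [Real.dist_eq, abs_lt]
    constructor <;> linarith
  · rw [hup]
    exact (hle k (by omega)).2
  · have ht : Tendsto (fun k => h - gap k) atTop (𝓝 h) := by
      simpa using hgap0.const_sub h
    refine tendsto_of_tendsto_of_tendsto_of_le_of_le' ht tendsto_const_nhds ?_ ?_
    · filter_upwards [eventually_ge_atTop 1] with k hk
      linarith [(hle k hk).2]
    · filter_upwards [eventually_ge_atTop 1] with k hk
      exact (hle k hk).1
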